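/- Let θ₁ and θ₂ be independent real Gaussian random variables with θ₁ ~ N(μ₁, σ₁²), θ₂ ~ N(μ₂, σ₂²), and σ₁² + σ₂² > 0. Set s = √(σ₁² + σ₂²) and α = (μ₁ − μ₂)/s. Then E[max(θ₁, θ₂)²] = (μ₁² + σ₁²)·Φ(α) + (μ₂² + σ₂²)·Φ(−α) + (μ₁ + μ₂)·s·φ(α), where Φ and φ are the cumulative distribution function and probability density function of the standard Gaussian N(0,1). Consequently the variance of max(θ₁, θ₂) equals this second moment minus (μ₁Φ(α) + μ₂Φ(−α) + sφ(α))². -/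

import Mathlib

open MeasureTheory ProbabilityTheory Filter

/-- The cumulative distribution function of the standard Gaussian `N(0,1)`. -/
noncomputable def stdGaussianCDF (x : ℝ) : ℝ :=
  ((gaussianReal 0 1) (Set.Iic x)).toReal

/-- The probability density function of the standard Gaussian `N(0,1)`. -/
noncomputable def stdGaussianPDF (x : ℝ) : ℝ :=
  Real.exp (-x ^ 2 / 2) / Real.sqrt (2 * Real.pi)

/-!
For jointly Gaussian `X` and `Y`, put `D = X - Y` and `R = max D 0`. Then `max X Y = Y + R`, and
since `X ^ 2 - Y ^ 2 = (X + Y) * D`, also `max X Y ^ 2 = Y ^ 2 + (X + Y) * R`. Gaussian regression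
of `X + Y` on `D` reduces `cov[X + Y, R]` to `cov[D, R]`, and Stein's identity on the half-line
`D > 0` evaluates both `cov[D, R]` and the mean of `R`.
-/

section HalfLine

open Set Topology

variable {m : ℝ} {v : NNReal}

lemma hasDerivAt_gaussianPDFReal (m : ℝ) (v : NNReal) (x : ℝ) :
    HasDerivAt (gaussianPDFReal m v) (gaussianPDFReal m v x * (-(x - m) / v)) x := by
  have hexponent : HasDerivAt (fun y : ℝ ↦ -(y - m) ^ 2 / (2 * v)) (-(x - m) / v) x := by
    refine ((((hasDerivAt_id x).sub_const m).pow 2).neg.div_const (2 * (v : ℝ))).congr_deriv ?_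
    simp only [id_eq]
    ring
  rw [gaussianPDFReal_def]
  exact (hexponent.exp.const_mul _).congr_deriv (by ring)

lemma integrableOn_gaussianReal_iff (hv : v ≠ 0) {S : Set ℝ} (hS : MeasurableSet S) {f : ℝ → ℝ} :
    IntegrableOn f S (gaussianReal m v) ↔ IntegrableOn (fun x ↦ gaussianPDFReal m v x * f x) S := by
  rw [IntegrableOn, gaussianReal_of_var_ne_zero m hv, restrict_withDensity hS,
    integrable_withDensity_iff_integrable_smul' (measurable_gaussianPDF m v)
      (ae_of_all _ fun _ ↦ gaussianPDF_lt_top)]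
  simp only [toReal_gaussianPDF, smul_eq_mul, IntegrableOn]

lemma setIntegral_gaussianReal (hv : v ≠ 0) {S : Set ℝ} (hS : MeasurableSet S) (f : ℝ → ℝ) :
    ∫ x in S, f x ∂gaussianReal m v = ∫ x in S, gaussianPDFReal m v x * f x := by
  rw [gaussianReal_of_var_ne_zero m hv,
    setIntegral_withDensity_eq_setIntegral_toReal_smul (measurable_gaussianPDF m v)
      (ae_of_all _ fun _ ↦ gaussianPDF_lt_top) f hS]
  simp only [toReal_gaussianPDF, smul_eq_mul]

lemma setIntegral_Ioi_gaussianReal_stein (hv : v ≠ 0) {a : ℝ} {f f' : ℝ → ℝ}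
    (hf : ∀ x ∈ Ici a, HasDerivAt f (f' x) x) (hfi : IntegrableOn f (Ioi a) (gaussianReal m v))
    (hfi' : IntegrableOn (fun x ↦ (x - m) * f x - v * f' x) (Ioi a) (gaussianReal m v)) :
    ∫ x in Ioi a, ((x - m) * f x - v * f' x) ∂gaussianReal m v
      = v * (gaussianPDFReal m v a * f a) := by
  have hv' : (v : ℝ) ≠ 0 := NNReal.coe_ne_zero.mpr hv
  rw [integrableOn_gaussianReal_iff hv measurableSet_Ioi] at hfi hfi'
  have hderiv : ∀ x ∈ Ici a, HasDerivAt (fun x ↦ -v * (gaussianPDFReal m v x * f x))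
      (gaussianPDFReal m v x * ((x - m) * f x - v * f' x)) x := fun x hx ↦ by
    refine (((hasDerivAt_gaussianPDFReal m v x).mul (hf x hx)).const_mul (-(v : ℝ))).congr_deriv ?_
    field_simp
    ring
  have hlim : Tendsto (fun x ↦ -v * (gaussianPDFReal m v x * f x)) atTop (𝓝 0) :=
    tendsto_zero_of_hasDerivAt_of_integrableOn_Ioi (fun x hx ↦ hderiv x (Ioi_subset_Ici_self hx))
      hfi' (hfi.const_mul _)
  rw [setIntegral_gaussianReal hv measurableSet_Ioi,
    integral_Ioi_of_hasDerivAt_of_tendsto' hderiv hfi' hlim]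
  ring

lemma setIntegral_Ioi_sub_mean_gaussianReal (hv : v ≠ 0) (a : ℝ) :
    ∫ x in Ioi a, (x - m) ∂gaussianReal m v = v * gaussianPDFReal m v a := by
  have hint : Integrable (fun x ↦ x - m) (gaussianReal m v) :=
    ((memLp_id_gaussianReal 1).integrable le_rfl).sub (integrable_const m)
  simpa using setIntegral_Ioi_gaussianReal_stein (f := fun _ ↦ 1) hv
    (fun x _ ↦ hasDerivAt_const x 1) (integrable_const 1).integrableOn
    (by simpa using hint.integrableOn)

lemma setIntegral_Ioi_zero_sub_mean_mul_self_gaussianReal (hv : v ≠ 0) :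
    ∫ x in Ioi 0, (x - m) * x ∂gaussianReal m v = v * (gaussianReal m v).real (Ioi 0) := by
  have hL2 : MemLp (fun x : ℝ ↦ x) 2 (gaussianReal m v) := memLp_id_gaussianReal 2
  have hint : Integrable (fun x ↦ (x - m) * x) (gaussianReal m v) :=
    (hL2.sub (memLp_const m)).integrable_mul hL2
  have hstein := setIntegral_Ioi_gaussianReal_stein (a := 0) hv (fun x _ ↦ hasDerivAt_id x)
    (hL2.integrable one_le_two).integrableOn (hint.sub (integrable_const (v * 1 : ℝ))).integrableOn
  simp only [id_eq, mul_one, mul_zero] at hstein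
  rw [integral_sub hint.integrableOn (integrable_const _), setIntegral_const, smul_eq_mul]
    at hstein
  linarith

lemma max_zero_eq_indicator_Ioi {R : Type*} [LinearOrder R] [Zero R] (x : R) :
    max x 0 = (Ioi 0).indicator (fun y ↦ y) x := by
  rcases le_or_gt x 0 with hx | hx
  · simp [hx]
  · simp [hx, hx.le]

lemma integral_max_zero_gaussianReal (hv : v ≠ 0) :
    ∫ x, max x 0 ∂gaussianReal m v
      = m * (gaussianReal m v).real (Ioi 0) + v * gaussianPDFReal m v 0 := by
  have hint : Integrable (fun x ↦ x) (gaussianReal m v) :=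
    (memLp_id_gaussianReal 1).integrable le_rfl
  have hmean := setIntegral_Ioi_sub_mean_gaussianReal (m := m) hv 0
  rw [integral_sub hint.integrableOn (integrable_const m), setIntegral_const, smul_eq_mul] at hmean
  simp only [max_zero_eq_indicator_Ioi]
  rw [integral_indicator measurableSet_Ioi]
  linarith

lemma covariance_id_max_zero_gaussianReal (hv : v ≠ 0) :
    cov[id, fun x ↦ max x 0; gaussianReal m v] = v * (gaussianReal m v).real (Ioi 0) := by
  have hid : MemLp id 2 (gaussianReal m v) := memLp_id_gaussianReal 2
  have hmax : MemLp (fun x ↦ max x 0) 2 (gaussianReal m v) := hid.sup (memLp_const 0)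
  calc cov[id, fun x ↦ max x 0; gaussianReal m v]
      = cov[fun x ↦ x - m, fun x ↦ max x 0; gaussianReal m v] :=
        (covariance_sub_const_left (hid.integrable one_le_two) m).symm
    _ = ∫ x, (x - m) * max x 0 ∂gaussianReal m v := by
        have hcentered : ∫ x, (x - m) ∂gaussianReal m v = 0 := by
          rw [integral_sub (f := fun x ↦ x) (hid.integrable one_le_two) (integrable_const m),
            integral_id_gaussianReal, integral_const, probReal_univ, one_smul, sub_self]
        rw [covariance_eq_sub (X := fun x ↦ x - m) (hid.sub (memLp_const m)) hmax, hcentered,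
          zero_mul, sub_zero]
        rfl
    _ = ∫ x in Ioi 0, (x - m) * x ∂gaussianReal m v := by
        simp only [max_zero_eq_indicator_Ioi, ← integral_indicator measurableSet_Ioi,
          indicator_mul_right (Ioi 0) (fun x ↦ x - m)]
    _ = v * (gaussianReal m v).real (Ioi 0) :=
        setIntegral_Ioi_zero_sub_mean_mul_self_gaussianReal hv

end HalfLine

section Standardization

open Set

variable {m : ℝ} {v : NNReal}

lemma stdGaussianCDF_neg (x : ℝ) : stdGaussianCDF (-x) = 1 - stdGaussianCDF x := by
  have := nullSingletonClass_gaussianReal (μ := 0) one_ne_zero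
  calc stdGaussianCDF (-x)
      = ((gaussianReal 0 1).map (fun y ↦ -y)).real (Iic (-x)) := by
        rw [gaussianReal_map_neg, neg_zero]; rfl
    _ = (gaussianReal 0 1).real (Ioi x) := by
        rw [map_measureReal_apply measurable_neg measurableSet_Iic, neg_preimage, neg_Iic,
          neg_neg, measureReal_congr Ioi_ae_eq_Ici]
    _ = 1 - stdGaussianCDF x := by
        rw [← compl_Iic, probReal_compl_eq_one_sub measurableSet_Iic]; rfl

lemma gaussianReal_real_Ioi_zero (hv : v ≠ 0) :
    (gaussianReal m v).real (Ioi 0) = stdGaussianCDF (m / √v) := by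
  have := nullSingletonClass_gaussianReal (μ := 0) one_ne_zero
  have hs : 0 < √(v : ℝ) := Real.sqrt_pos.mpr (NNReal.coe_pos.mpr (pos_iff_ne_zero.mpr hv))
  have hmap : (gaussianReal 0 1).map (fun x ↦ m - √v * x) = gaussianReal m v := by
    have hscale : (gaussianReal 0 1).map (√v * ·) = gaussianReal 0 v := by
      rw [gaussianReal_map_const_mul]
      congr 1
      · simp
      · ext; simp
    rw [← Function.comp_def (m - ·) (√v * ·), ← Measure.map_map (by fun_prop) (by fun_prop),
      hscale, gaussianReal_map_const_sub, sub_zero]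
  have hpre : (fun x ↦ m - √v * x) ⁻¹' Ioi 0 = Iio (m / √v) := by
    ext x
    simp [lt_div_iff₀ hs, mul_comm]
  rw [← hmap, map_measureReal_apply (by fun_prop) measurableSet_Ioi, hpre,
    measureReal_congr Iio_ae_eq_Iic]
  rfl

lemma mul_gaussianPDFReal_zero (m : ℝ) (v : NNReal) :
    v * gaussianPDFReal m v 0 = √v * stdGaussianPDF (m / √v) := by
  calc v * gaussianPDFReal m v 0
      = v / √v * stdGaussianPDF (m / √v) := by
        rw [gaussianPDFReal, stdGaussianPDF, div_pow, Real.sq_sqrt v.coe_nonneg,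
          Real.sqrt_mul (by positivity)]
        ring_nf
    _ = √v * stdGaussianPDF (m / √v) := by rw [Real.div_sqrt]

end Standardization

section RandomVariables

variable {Ω : Type*} [MeasurableSpace Ω] {P : Measure Ω} {X Y : Ω → ℝ}

lemma hasLaw_gaussianReal_of_hasGaussianLaw (hX : HasGaussianLaw X P) :
    HasLaw X (gaussianReal P[X] Var[X; P].toNNReal) P :=
  ⟨hX.aemeasurable, hX.map_eq_gaussianReal⟩

lemma integral_max_zero_of_hasGaussianLaw (hX : HasGaussianLaw X P) (hvar : 0 < Var[X; P]) :
    ∫ ω, max (X ω) 0 ∂P = P[X] * stdGaussianCDF (P[X] / √Var[X; P])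
      + √Var[X; P] * stdGaussianPDF (P[X] / √Var[X; P]) := by
  have hv : Var[X; P].toNNReal ≠ 0 := (Real.toNNReal_pos.mpr hvar).ne'
  have hlaw := hasLaw_gaussianReal_of_hasGaussianLaw hX
  have htransfer := hlaw.integral_comp (f := fun x ↦ max x 0) (by fun_prop)
  rwa [integral_max_zero_gaussianReal hv, gaussianReal_real_Ioi_zero hv,
    mul_gaussianPDFReal_zero, Real.coe_toNNReal _ hvar.le] at htransfer

lemma covariance_max_zero_of_hasGaussianLaw (hX : HasGaussianLaw X P) (hvar : 0 < Var[X; P]) :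
    cov[X, fun ω ↦ max (X ω) 0; P] = Var[X; P] * stdGaussianCDF (P[X] / √Var[X; P]) := by
  have hv : Var[X; P].toNNReal ≠ 0 := (Real.toNNReal_pos.mpr hvar).ne'
  have hlaw := hasLaw_gaussianReal_of_hasGaussianLaw hX
  have htransfer := hlaw.covariance_fun_comp (f := id) (g := fun x ↦ max x 0)
    (by fun_prop) (by fun_prop)
  rwa [covariance_id_max_zero_gaussianReal hv, gaussianReal_real_Ioi_zero hv,
    Real.coe_toNNReal _ hvar.le] at htransfer

-- The residual `Var[Y] X - cov[X, Y] Y` is uncorrelated with `Y`, hence independent of `g ∘ Y`.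
lemma variance_mul_covariance_comp (hXY : HasGaussianLaw (fun ω ↦ (X ω, Y ω)) P) {g : ℝ → ℝ}
    (hg : Measurable g) (hgY : MemLp (fun ω ↦ g (Y ω)) 2 P) :
    Var[Y; P] * cov[X, fun ω ↦ g (Y ω); P] = cov[X, Y; P] * cov[Y, fun ω ↦ g (Y ω); P] := by
  have := hXY.isProbabilityMeasure
  have hX := hXY.fst.memLp_two
  have hY := hXY.snd.memLp_two
  let Z : Ω → ℝ := Var[Y; P] • X - cov[X, Y; P] • Y
  have hZ : MemLp Z 2 P := (hX.const_smul _).sub (hY.const_smul _)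
  have hZ_cov (U : Ω → ℝ) (hU : MemLp U 2 P) :
      cov[Z, U; P] = Var[Y; P] * cov[X, U; P] - cov[X, Y; P] * cov[Y, U; P] := by
    rw [covariance_sub_left (hX.const_smul _) (hY.const_smul _) hU, covariance_smul_left,
      covariance_smul_left]
  have hZY_law : HasGaussianLaw (fun ω ↦ (Z ω, Y ω)) P :=
    hXY.map_fun ((Var[Y; P] • ContinuousLinearMap.fst ℝ ℝ ℝ
      - cov[X, Y; P] • ContinuousLinearMap.snd ℝ ℝ ℝ).prod (ContinuousLinearMap.snd ℝ ℝ ℝ))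
  have hZY_indep : IndepFun Z Y P := hZY_law.indepFun_of_covariance_eq_zero <| by
    rw [hZ_cov Y hY, covariance_self hXY.snd.aemeasurable]
    ring
  have hZg : cov[Z, fun ω ↦ g (Y ω); P] = 0 :=
    (hZY_indep.comp measurable_id hg).covariance_eq_zero hZ hgY
  rw [hZ_cov _ hgY] at hZg
  linarith

lemma covariance_add_sub_self [IsFiniteMeasure P] (hX : MemLp X 2 P) (hY : MemLp Y 2 P) :
    cov[X + Y, X - Y; P] = Var[X; P] - Var[Y; P] := by
  rw [covariance_add_left hX hY (hX.sub hY), covariance_sub_right hX hX hY,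
    covariance_sub_right hY hX hY, covariance_comm Y X, covariance_self hX.aemeasurable,
    covariance_self hY.aemeasurable]
  ring

lemma covariance_add_max_sub_zero (hXY : HasGaussianLaw (fun ω ↦ (X ω, Y ω)) P)
    (hvar : 0 < Var[X - Y; P]) :
    cov[X + Y, fun ω ↦ max ((X - Y) ω) 0; P]
      = (Var[X; P] - Var[Y; P]) * stdGaussianCDF (P[X - Y] / √Var[X - Y; P]) := by
  have := hXY.isProbabilityMeasure
  have hX := hXY.fst.memLp_two
  have hY := hXY.snd.memLp_two
  have hsum_diff : HasGaussianLaw (fun ω ↦ ((X + Y) ω, (X - Y) ω)) P :=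
    hXY.map_fun ((ContinuousLinearMap.fst ℝ ℝ ℝ + ContinuousLinearMap.snd ℝ ℝ ℝ).prod
      (ContinuousLinearMap.fst ℝ ℝ ℝ - ContinuousLinearMap.snd ℝ ℝ ℝ))
  have hregression := variance_mul_covariance_comp hsum_diff (g := fun x ↦ max x 0)
    (by fun_prop) ((hX.sub hY).sup (memLp_const 0))
  rw [covariance_add_sub_self hX hY,
    covariance_max_zero_of_hasGaussianLaw hsum_diff.snd hvar] at hregression
  exact mul_left_cancel₀ hvar.ne' (by linarith)

lemma integral_max_eq_add (hX : Integrable X P) (hY : Integrable Y P) :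
    ∫ ω, max (X ω) (Y ω) ∂P = P[Y] + ∫ ω, max ((X - Y) ω) 0 ∂P := by
  have hmax (ω : Ω) : max (X ω) (Y ω) = Y ω + max ((X - Y) ω) 0 := sup_eq_add_posPart_sub _ _
  simp only [hmax]
  exact integral_add hY (hX.sub hY).pos_part

lemma max_sq_eq_sq_add_mul_max_sub_zero {R : Type*} [CommRing R] [LinearOrder R]
    [IsOrderedAddMonoid R] (x y : R) : max x y ^ 2 = y ^ 2 + (x + y) * max (x - y) 0 := by
  rcases le_total x y with h | h
  · rw [max_eq_right h, max_eq_right (sub_nonpos.mpr h), mul_zero, add_zero]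
  · rw [max_eq_left h, max_eq_left (sub_nonneg.mpr h)]
    ring

lemma integral_max_sq_eq_add_covariance [IsProbabilityMeasure P] (hX : MemLp X 2 P)
    (hY : MemLp Y 2 P) :
    ∫ ω, max (X ω) (Y ω) ^ 2 ∂P = P[Y] ^ 2 + Var[Y; P]
      + cov[X + Y, fun ω ↦ max ((X - Y) ω) 0; P]
      + (P[X] + P[Y]) * ∫ ω, max ((X - Y) ω) 0 ∂P := by
  have hR : MemLp (fun ω ↦ max ((X - Y) ω) 0) 2 P := (hX.sub hY).sup (memLp_const 0)
  have hsplit : ∫ ω, max (X ω) (Y ω) ^ 2 ∂P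
      = P[Y ^ 2] + P[(X + Y) * fun ω ↦ max ((X - Y) ω) 0] := by
    simp only [max_sq_eq_sq_add_mul_max_sub_zero]
    exact integral_add hY.integrable_sq ((hX.add hY).integrable_mul hR)
  rw [hsplit, variance_eq_sub hY, covariance_eq_sub (hX.add hY) hR,
    integral_add' (hX.integrable one_le_two) (hY.integrable one_le_two)]
  ring

lemma integral_max_of_hasGaussianLaw (hXY : HasGaussianLaw (fun ω ↦ (X ω, Y ω)) P) {s α : ℝ}
    (hs : s = √Var[X - Y; P]) (hs_pos : 0 < s) (hα : α = (P[X] - P[Y]) / s) :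
    ∫ ω, max (X ω) (Y ω) ∂P
      = P[X] * stdGaussianCDF α + P[Y] * stdGaussianCDF (-α) + s * stdGaussianPDF α := by
  have hX := hXY.fst.integrable
  have hY := hXY.snd.integrable
  have hvar : 0 < Var[X - Y; P] := Real.sqrt_pos.mp (hs ▸ hs_pos)
  rw [integral_max_eq_add hX hY, integral_max_zero_of_hasGaussianLaw hXY.sub hvar,
    integral_sub' hX hY, ← hs, ← hα, stdGaussianCDF_neg]
  ring

lemma integral_max_sq_of_hasGaussianLaw (hXY : HasGaussianLaw (fun ω ↦ (X ω, Y ω)) P) {s α : ℝ}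
    (hs : s = √Var[X - Y; P]) (hs_pos : 0 < s) (hα : α = (P[X] - P[Y]) / s) :
    ∫ ω, max (X ω) (Y ω) ^ 2 ∂P
      = (P[X] ^ 2 + Var[X; P]) * stdGaussianCDF α + (P[Y] ^ 2 + Var[Y; P]) * stdGaussianCDF (-α)
        + (P[X] + P[Y]) * s * stdGaussianPDF α := by
  have := hXY.isProbabilityMeasure
  have hvar : 0 < Var[X - Y; P] := Real.sqrt_pos.mp (hs ▸ hs_pos)
  rw [integral_max_sq_eq_add_covariance hXY.fst.memLp_two hXY.snd.memLp_two,
    covariance_add_max_sub_zero hXY hvar, integral_max_zero_of_hasGaussianLaw hXY.sub hvar,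
    integral_sub' hXY.fst.integrable hXY.snd.integrable, ← hs, ← hα, stdGaussianCDF_neg]
  ring

end RandomVariables

theorem stmt8_general
    {Ω : Type*} [MeasurableSpace Ω] {P : Measure Ω} {X Y : Ω → ℝ}
    (hXY : HasGaussianLaw (fun ω ↦ (X ω, Y ω)) P) {μ₁ μ₂ v₁ v₂ s α : ℝ}
    (hμ₁ : P[X] = μ₁) (hμ₂ : P[Y] = μ₂) (hv₁ : Var[X; P] = v₁) (hv₂ : Var[Y; P] = v₂)
    (hs : s = √(v₁ + v₂ - 2 * cov[X, Y; P])) (hs_pos : 0 < s) (hα : α = (μ₁ - μ₂) / s) :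
    (∫ ω, max (X ω) (Y ω) ^ 2 ∂P
      = (μ₁ ^ 2 + v₁) * stdGaussianCDF α + (μ₂ ^ 2 + v₂) * stdGaussianCDF (-α)
        + (μ₁ + μ₂) * s * stdGaussianPDF α) ∧
    (Var[fun ω ↦ max (X ω) (Y ω); P]
      = (μ₁ ^ 2 + v₁) * stdGaussianCDF α + (μ₂ ^ 2 + v₂) * stdGaussianCDF (-α)
        + (μ₁ + μ₂) * s * stdGaussianPDF α
        - (μ₁ * stdGaussianCDF α + μ₂ * stdGaussianCDF (-α) + s * stdGaussianPDF α) ^ 2) := by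
  have := hXY.isProbabilityMeasure
  have hX := hXY.fst.memLp_two
  have hY := hXY.snd.memLp_two
  have hsd : s = √Var[X - Y; P] := by
    rw [variance_sub hX hY, hv₁, hv₂, hs]
    ring_nf
  subst hμ₁ hμ₂ hv₁ hv₂
  rw [← integral_max_of_hasGaussianLaw hXY hsd hs_pos hα,
    ← integral_max_sq_of_hasGaussianLaw hXY hsd hs_pos hα]
  exact ⟨rfl, variance_eq_sub (hX.sup hY)⟩

/-- Clark's formula for the second moment of the maximum of two independent Gaussians:
`E[max(θ₁, θ₂)²] = (μ₁² + σ₁²)·Φ(α) + (μ₂² + σ₂²)·Φ(−α) + (μ₁ + μ₂)·s·φ(α)` with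
`s = √(σ₁² + σ₂²)` and `α = (μ₁ − μ₂)/s`; consequently the variance of `max(θ₁, θ₂)`
is this second moment minus the square of the Clark mean. -/
theorem stmt8
    {Ω : Type*} [MeasurableSpace Ω] (P : Measure Ω) [IsProbabilityMeasure P]
    (θ₁ θ₂ : Ω → ℝ) (hθ₁ : Measurable θ₁) (hθ₂ : Measurable θ₂)
    (μ₁ μ₂ : ℝ) (v₁ v₂ : NNReal)
    (hlaw₁ : Measure.map θ₁ P = gaussianReal μ₁ v₁)
    (hlaw₂ : Measure.map θ₂ P = gaussianReal μ₂ v₂)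
    (hindep : IndepFun θ₁ θ₂ P)
    (hv : 0 < (v₁ : ℝ) + (v₂ : ℝ)) :
    (∫ ω, (max (θ₁ ω) (θ₂ ω)) ^ 2 ∂P
      = (μ₁ ^ 2 + (v₁ : ℝ)) * stdGaussianCDF ((μ₁ - μ₂) / Real.sqrt ((v₁ : ℝ) + (v₂ : ℝ)))
        + (μ₂ ^ 2 + (v₂ : ℝ))
          * stdGaussianCDF (-((μ₁ - μ₂) / Real.sqrt ((v₁ : ℝ) + (v₂ : ℝ))))
        + (μ₁ + μ₂) * Real.sqrt ((v₁ : ℝ) + (v₂ : ℝ))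
          * stdGaussianPDF ((μ₁ - μ₂) / Real.sqrt ((v₁ : ℝ) + (v₂ : ℝ)))) ∧
    (variance (fun ω => max (θ₁ ω) (θ₂ ω)) P
      = (μ₁ ^ 2 + (v₁ : ℝ)) * stdGaussianCDF ((μ₁ - μ₂) / Real.sqrt ((v₁ : ℝ) + (v₂ : ℝ)))
        + (μ₂ ^ 2 + (v₂ : ℝ))
          * stdGaussianCDF (-((μ₁ - μ₂) / Real.sqrt ((v₁ : ℝ) + (v₂ : ℝ))))
        + (μ₁ + μ₂) * Real.sqrt ((v₁ : ℝ) + (v₂ : ℝ))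
          * stdGaussianPDF ((μ₁ - μ₂) / Real.sqrt ((v₁ : ℝ) + (v₂ : ℝ)))
        - (μ₁ * stdGaussianCDF ((μ₁ - μ₂) / Real.sqrt ((v₁ : ℝ) + (v₂ : ℝ)))
            + μ₂ * stdGaussianCDF (-((μ₁ - μ₂) / Real.sqrt ((v₁ : ℝ) + (v₂ : ℝ))))
            + Real.sqrt ((v₁ : ℝ) + (v₂ : ℝ))
              * stdGaussianPDF ((μ₁ - μ₂) / Real.sqrt ((v₁ : ℝ) + (v₂ : ℝ)))) ^ 2) := by
  have h₁ : HasLaw θ₁ (gaussianReal μ₁ v₁) P := ⟨hθ₁.aemeasurable, hlaw₁⟩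
  have h₂ : HasLaw θ₂ (gaussianReal μ₂ v₂) P := ⟨hθ₂.aemeasurable, hlaw₂⟩
  have hG₁ := h₁.hasGaussianLaw
  have hG₂ := h₂.hasGaussianLaw
  have hcov := hindep.covariance_eq_zero hG₁.memLp_two hG₂.memLp_two
  exact stmt8_general (hindep.hasGaussianLaw hG₁ hG₂) (by simp [h₁.integral_eq])
    (by simp [h₂.integral_eq]) (by simp [h₁.variance_eq]) (by simp [h₂.variance_eq])
    (by simp [hcov]) (Real.sqrt_pos.mpr hv) rfl
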